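/- Energy bound in the smooth setting (Theorem 2.1, upper inequality): Let d ≥ 1, let f : ℝ^d → ℝ, let u : ℝ^d → ℝ be a C² compactly supported function with Δu(x) = −f(x) for all x ∈ ℝ^d, and let σ* : ℝ^d → ℝ^d be any C¹ compactly supported vector field with div σ*(x) = −f(x) for all x ∈ ℝ^d. Then ∫_{ℝ^d} ‖∇u(x)‖² dx ≤ ∫_{ℝ^d} ‖σ*(x)‖² dx. -/

import Mathlib

open MeasureTheory RealInnerProductSpace

/-- Divergence of a vector field on `ℝ^d`: `div σ (x) = ∑ i (∂σᵢ/∂xᵢ)(x)`. -/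
noncomputable def vdiv {d : ℕ} (σ : EuclideanSpace ℝ (Fin d) → EuclideanSpace ℝ (Fin d))
    (x : EuclideanSpace ℝ (Fin d)) : ℝ :=
  ∑ i : Fin d, fderiv ℝ σ x (EuclideanSpace.single i (1 : ℝ)) i

/-! `σ - ∇u` is divergence free, hence `L²`-orthogonal to `∇u` by integration by parts against the
compactly supported `u`; Pythagoras gives `∫ ‖σ‖² = ∫ ‖∇u‖² + ∫ ‖σ - ∇u‖²`. -/

section Divergence

variable {E : Type*} [NormedAddCommGroup E] [NormedSpace ℝ E]

/-- The divergence of a vector field on a finite-dimensional normed space, encoded as the trace of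
its derivative so that no choice of coordinates is needed. It is `0` where the field is not
differentiable. -/
noncomputable def divergence (σ : E → E) (x : E) : ℝ :=
  LinearMap.trace ℝ E (fderiv ℝ σ x)

theorem divergence_sub {σ τ : E → E} {x : E} (hσ : DifferentiableAt ℝ σ x)
    (hτ : DifferentiableAt ℝ τ x) :
    divergence (σ - τ) x = divergence σ x - divergence τ x := by
  simp only [divergence, fderiv_sub hσ hτ, ContinuousLinearMap.toLinearMap_sub, map_sub]

theorem divergence_eq_sum_coord {ι : Type*} [Fintype ι] (b : Module.Basis ι ℝ E) (σ : E → E)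
    (x : E) : divergence σ x = ∑ i, b.coord i (fderiv ℝ σ x (b i)) := by
  classical
  simp only [divergence, LinearMap.trace_eq_matrix_trace ℝ b, Matrix.trace, Matrix.diag_apply,
    LinearMap.toMatrix_apply, ContinuousLinearMap.coe_coe, Module.Basis.coord_apply]

theorem vdiv_eq_divergence {d : ℕ} (σ : EuclideanSpace ℝ (Fin d) → EuclideanSpace ℝ (Fin d))
    (x : EuclideanSpace ℝ (Fin d)) : vdiv σ x = divergence σ x := by
  simp [vdiv, divergence_eq_sum_coord (EuclideanSpace.basisFun (Fin d) ℝ).toBasis]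

end Divergence

section IntegrationByParts

variable {E : Type*} [NormedAddCommGroup E] [NormedSpace ℝ E] [MeasurableSpace E] [BorelSpace E]
  {μ : Measure E} {u g : E → ℝ}

theorem integrable_mul_fderiv_apply [IsFiniteMeasureOnCompacts μ] (hu : Continuous u)
    (husupp : HasCompactSupport u) (hg : ContDiff ℝ 1 g) (v : E) :
    Integrable (fun x ↦ u x * fderiv ℝ g x v) μ :=
  (hu.mul ((hg.continuous_fderiv one_ne_zero).clm_apply
    continuous_const)).integrable_of_hasCompactSupport husupp.mul_right

theorem integrable_fderiv_apply_mul [IsFiniteMeasureOnCompacts μ] (hu : ContDiff ℝ 1 u)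
    (husupp : HasCompactSupport u) (hg : Continuous g) (v : E) :
    Integrable (fun x ↦ fderiv ℝ u x v * g x) μ :=
  (((hu.continuous_fderiv one_ne_zero).clm_apply
    continuous_const).mul hg).integrable_of_hasCompactSupport (husupp.fderiv_apply ℝ v).mul_right

variable [FiniteDimensional ℝ E] [μ.IsAddHaarMeasure]

theorem integral_mul_fderiv_apply_eq_neg (hu : ContDiff ℝ 1 u) (husupp : HasCompactSupport u)
    (hg : ContDiff ℝ 1 g) (v : E) :
    ∫ x, u x * fderiv ℝ g x v ∂μ = -∫ x, fderiv ℝ u x v * g x ∂μ :=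
  integral_mul_fderiv_eq_neg_fderiv_mul_of_integrable
    (integrable_fderiv_apply_mul hu husupp hg.continuous v)
    (integrable_mul_fderiv_apply hu.continuous husupp hg v)
    ((hu.continuous.mul hg.continuous).integrable_of_hasCompactSupport husupp.mul_right)
    (fun x _ ↦ hu.differentiable one_ne_zero x) (fun x _ ↦ hg.differentiable one_ne_zero x)

theorem integral_mul_divergence_eq_neg (hu : ContDiff ℝ 1 u) (husupp : HasCompactSupport u)
    {σ : E → E} (hσ : ContDiff ℝ 1 σ) :
    ∫ x, u x * divergence σ x ∂μ = -∫ x, fderiv ℝ u x (σ x) ∂μ := by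
  let b := Module.finBasis ℝ E
  let σcoord i := (b.coord i).toContinuousLinearMap ∘ σ
  have hσcoord i : ContDiff ℝ 1 (σcoord i) := ContinuousLinearMap.contDiff _ |>.comp hσ
  have hdiv x : divergence σ x = ∑ i, fderiv ℝ (σcoord i) x (b i) := by
    rw [divergence_eq_sum_coord b]
    refine Finset.sum_congr rfl fun i _ ↦ ?_
    rw [fderiv_comp x (ContinuousLinearMap.differentiableAt _)
      (hσ.differentiable one_ne_zero x), ContinuousLinearMap.fderiv]
    rfl
  have hderiv x : fderiv ℝ u x (σ x) = ∑ i, fderiv ℝ u x (b i) * σcoord i x := by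
    conv_lhs => rw [← b.sum_repr (σ x)]
    simp only [map_sum, map_smul, smul_eq_mul, mul_comm, σcoord, Function.comp_apply,
      LinearMap.coe_toContinuousLinearMap', Module.Basis.coord_apply]
  simp only [hdiv, hderiv, Finset.mul_sum]
  rw [integral_finsetSum _ fun i _ ↦
      integrable_mul_fderiv_apply hu.continuous husupp (hσcoord i) (b i),
    integral_finsetSum _ fun i _ ↦
      integrable_fderiv_apply_mul hu husupp (hσcoord i).continuous (b i),
    ← Finset.sum_neg_distrib]
  exact Finset.sum_congr rfl fun i _ ↦
    integral_mul_fderiv_apply_eq_neg hu husupp (hσcoord i) (b i)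

end IntegrationByParts

section Gradient

variable {E : Type*} [NormedAddCommGroup E] [InnerProductSpace ℝ E] [CompleteSpace E] {u : E → ℝ}

theorem contDiff_gradient {m n : WithTop ℕ∞} (hu : ContDiff ℝ n u) (hmn : m + 1 ≤ n) :
    ContDiff ℝ m (gradient u) :=
  (InnerProductSpace.toDual ℝ E).symm.contDiff.comp (hu.fderiv_right hmn)

theorem hasCompactSupport_gradient (husupp : HasCompactSupport u) :
    HasCompactSupport (gradient u) :=
  (husupp.fderiv ℝ).comp_left (g := (InnerProductSpace.toDual ℝ E).symm) (map_zero _)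

end Gradient

section Energy

theorem integral_norm_add_sq {α F : Type*} [MeasurableSpace α] {μ : Measure α}
    [NormedAddCommGroup F] [InnerProductSpace ℝ F] {f g : α → F} (hf : MemLp f 2 μ)
    (hg : MemLp g 2 μ) :
    ∫ x, ‖f x + g x‖ ^ 2 ∂μ =
      ∫ x, ‖f x‖ ^ 2 ∂μ + 2 * ∫ x, ⟪f x, g x⟫ ∂μ + ∫ x, ‖g x‖ ^ 2 ∂μ := by
  have hf2 : Integrable (fun x ↦ ‖f x‖ ^ 2) μ := hf.integrable_norm_pow two_ne_zero
  have hg2 : Integrable (fun x ↦ ‖g x‖ ^ 2) μ := hg.integrable_norm_pow two_ne_zero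
  have hfg2 : Integrable (fun x ↦ ‖f x + g x‖ ^ 2) μ :=
    (hf.add hg).integrable_norm_pow two_ne_zero
  have hsub : Integrable (fun x ↦ ‖f x + g x‖ ^ 2 - ‖f x‖ ^ 2) μ := hfg2.sub hf2
  have hpolar x : 2 * ⟪f x, g x⟫ = ‖f x + g x‖ ^ 2 - ‖f x‖ ^ 2 - ‖g x‖ ^ 2 := by
    rw [norm_add_sq_real]
    ring
  rw [← integral_const_mul, integral_congr_ae (.of_forall hpolar),
    integral_sub hsub hg2, integral_sub hfg2 hf2]
  ring

variable {E : Type*} [NormedAddCommGroup E] [InnerProductSpace ℝ E] [FiniteDimensional ℝ E]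
  [MeasurableSpace E] [BorelSpace E] {μ : Measure E} [μ.IsAddHaarMeasure] {u : E → ℝ} {σ : E → E}

theorem integral_inner_gradient_eq_zero_of_divergence_eq_zero (hu : ContDiff ℝ 1 u)
    (husupp : HasCompactSupport u) (hσ : ContDiff ℝ 1 σ) (hdiv : ∀ x, divergence σ x = 0) :
    ∫ x, ⟪gradient u x, σ x⟫ ∂μ = 0 := by
  simpa only [hdiv, mul_zero, integral_zero, zero_eq_neg, ← inner_gradient_left] using
    integral_mul_divergence_eq_neg (μ := μ) hu husupp hσ

theorem energy_upper_bound_general (hu : ContDiff ℝ 2 u) (husupp : HasCompactSupport u)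
    (hσ : ContDiff ℝ 1 σ) (hσL2 : MemLp σ 2 μ)
    (hdiv : ∀ x, divergence σ x = divergence (gradient u) x) :
    ∫ x, ‖gradient u x‖ ^ 2 ∂μ ≤ ∫ x, ‖σ x‖ ^ 2 ∂μ := by
  have hgrad : ContDiff ℝ 1 (gradient u) := contDiff_gradient hu one_add_one_eq_two.le
  have hgradL2 : MemLp (gradient u) 2 μ :=
    hgrad.continuous.memLp_of_hasCompactSupport (hasCompactSupport_gradient husupp)
  have hdiv_sub x : divergence (σ - gradient u) x = 0 := by
    rw [divergence_sub (hσ.differentiable one_ne_zero x) (hgrad.differentiable one_ne_zero x),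
      hdiv, sub_self]
  have horth : ∫ x, ⟪gradient u x, (σ - gradient u) x⟫ ∂μ = 0 :=
    integral_inner_gradient_eq_zero_of_divergence_eq_zero (hu.of_le one_le_two) husupp
      (hσ.sub hgrad) hdiv_sub
  calc ∫ x, ‖gradient u x‖ ^ 2 ∂μ
      ≤ ∫ x, ‖gradient u x‖ ^ 2 ∂μ + ∫ x, ‖(σ - gradient u) x‖ ^ 2 ∂μ :=
        le_add_of_nonneg_right (integral_nonneg fun x ↦ sq_nonneg _)
    _ = ∫ x, ‖gradient u x + (σ - gradient u) x‖ ^ 2 ∂μ := by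
        rw [integral_norm_add_sq hgradL2 (hσL2.sub hgradL2), horth, mul_zero, add_zero]
    _ = ∫ x, ‖σ x‖ ^ 2 ∂μ := by simp only [Pi.sub_apply, add_sub_cancel]

end Energy

/-- Energy bound (upper inequality of Theorem 2.1): `∫ ‖∇u‖² ≤ ∫ ‖σ*‖²`. -/
theorem energy_upper_bound {d : ℕ} (hd : 1 ≤ d)
    (f u : EuclideanSpace ℝ (Fin d) → ℝ)
    (hu : ContDiff ℝ 2 u) (husupp : HasCompactSupport u)
    (hlap : ∀ x, vdiv (gradient u) x = - f x)
    (σstar : EuclideanSpace ℝ (Fin d) → EuclideanSpace ℝ (Fin d))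
    (hσ : ContDiff ℝ 1 σstar) (hσsupp : HasCompactSupport σstar)
    (hdiv : ∀ x, vdiv σstar x = - f x) :
    (∫ x, ‖gradient u x‖ ^ 2) ≤ ∫ x, ‖σstar x‖ ^ 2 :=
  energy_upper_bound_general hu husupp hσ (hσ.continuous.memLp_of_hasCompactSupport hσsupp)
    fun x ↦ by rw [← vdiv_eq_divergence, ← vdiv_eq_divergence, hdiv, hlap]
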